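/- (Cambanis–Simons–Stout / scalar optimal transport) Let μ and ν be Borel probability measures on ℝ and let c : ℝ² → ℝ be a submodular cost satisfying the standing assumption. Then the optimal transport cost has the closed form inf_{π ∈ M(μ,ν)} ∫ c(x,y) dπ(x,y) = ∫₀¹ c(Q_μ(t), Q_ν(t)) dt, where Q_μ and Q_ν are the quantile functions of μ and ν. -/

import Mathlib

/-!
The joint law `γ` of `(quantile μ, quantile ν)` under the uniform distribution on `(0, 1)` is a
coupling of `μ` and `ν`, so it suffices to show that it costs no more than any coupling `π`.
Subtracting `a(x) + b(y)` changes the cost of every coupling by the same constant and preserves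
submodularity and lower semicontinuity, so the cost may be taken nonnegative. For the empirical
measures of finitely many points `(xᵢ, yᵢ)` the claim is a rearrangement inequality: by
submodularity, pairing the sorted `x`s with the sorted `y`s is cheapest. Sample the points
independently from `π`. By the strong law of large numbers the empirical cost tends to `∫ c dπ`, and
the empirical distribution functions converge at every rational point, so the empirical quantiles
converge almost everywhere. Fatou's lemma and lower semicontinuity then bound `∫ c dγ`.
-/

open MeasureTheory Set

/-- A coupling of `(μ, ν)`: a measure on the product whose marginals are `μ` and `ν`. -/
def IsCoupling {X Y : Type*} [MeasurableSpace X] [MeasurableSpace Y]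
    (π : Measure (X × Y)) (μ : Measure X) (ν : Measure Y) : Prop :=
  π.map Prod.fst = μ ∧ π.map Prod.snd = ν

/-- `c : ℝ² → ℝ` is submodular: `x' ≤ x` and `y' ≤ y` imply
`c(x,y) + c(x',y') ≤ c(x,y') + c(x',y)`. -/
def Submodular (c : ℝ × ℝ → ℝ) : Prop :=
  ∀ x x' y y' : ℝ, x' ≤ x → y' ≤ y →
    c (x, y) + c (x', y') ≤ c (x, y') + c (x', y)

/-- The quantile function `Q_μ(t) = inf { x : F_μ(x) ≥ t }` of a measure on `ℝ`. -/
noncomputable def quantile (μ : Measure ℝ) (t : ℝ) : ℝ :=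
  sInf {x : ℝ | t ≤ (μ (Iic x)).toReal}

open Filter Topology ProbabilityTheory
open scoped ENNReal

section Quantile

variable (μ : Measure ℝ) [IsProbabilityMeasure μ]

lemma quantile_le_iff {t : ℝ} (ht : t ∈ Ioo (0 : ℝ) 1) (x : ℝ) :
    quantile μ t ≤ x ↔ t ≤ μ.real (Iic x) := by
  have quantile_eq : quantile μ t = sInf {x : ℝ | t ≤ cdf μ x} := by
    simp only [quantile, cdf_eq_real, measureReal_def]
  have nonempty : {x : ℝ | t ≤ cdf μ x}.Nonempty :=
    ((tendsto_cdf_atTop μ).eventually_const_le ht.2).exists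
  have bddBelow : BddBelow {x : ℝ | t ≤ cdf μ x} := by
    obtain ⟨y, hy⟩ := ((tendsto_cdf_atBot μ).eventually_lt_const ht.1).exists
    exact ⟨y, fun z hz => ((monotone_cdf μ).reflect_lt (hy.trans_le hz)).le⟩
  rw [quantile_eq, ← cdf_eq_real]
  refine ⟨fun h => ?_, fun h => csInf_le bddBelow h⟩
  have right_cont : Tendsto (cdf μ) (𝓝[>] x) (𝓝 (cdf μ x)) :=
    ((cdf μ).right_continuous x).mono Ioi_subset_Ici_self
  refine ge_of_tendsto right_cont ?_
  filter_upwards [self_mem_nhdsWithin] with y hy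
  obtain ⟨z, hz, hzy⟩ := (csInf_lt_iff bddBelow nonempty).1 (h.trans_lt hy)
  exact le_trans hz (monotone_cdf μ hzy.le)

lemma monotoneOn_quantile : MonotoneOn (quantile μ) (Ioo 0 1) := fun _ hs _ ht hst =>
  (quantile_le_iff μ hs _).2 (hst.trans ((quantile_le_iff μ ht _).1 le_rfl))

lemma aemeasurable_quantile : AEMeasurable (quantile μ) (volume.restrict (Ioo 0 1)) :=
  aemeasurable_restrict_of_monotoneOn measurableSet_Ioo (monotoneOn_quantile μ)

lemma map_quantile_volume_restrict : (volume.restrict (Ioo 0 1)).map (quantile μ) = μ := by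
  symm
  refine Measure.ext_of_Iic _ _ fun a => ?_
  have preimage_ae_eq :
      quantile μ ⁻¹' Iic a =ᵐ[volume.restrict (Ioo 0 1)] Iic (μ.real (Iic a)) := by
    rw [eventuallyEq_set]
    filter_upwards [ae_restrict_mem measurableSet_Ioo] with t ht
    exact quantile_le_iff μ ht a
  rw [Measure.map_apply_of_aemeasurable (aemeasurable_quantile μ) measurableSet_Iic,
    measure_congr preimage_ae_eq, Measure.restrict_congr_set Ioo_ae_eq_Ioc,
    Measure.restrict_apply measurableSet_Iic, inter_comm, Ioc_inter_Iic,
    min_eq_right measureReal_le_one, Real.volume_Ioc, sub_zero, ofReal_measureReal]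

variable {μ}

lemma tendsto_quantile {ι : Type*} {l : Filter ι} {μs : ι → Measure ℝ}
    [∀ i, IsProbabilityMeasure (μs i)] {D : Set ℝ} (hD : Dense D)
    (hμs : ∀ q ∈ D, Tendsto (fun i => (μs i).real (Iic q)) l (𝓝 (μ.real (Iic q))))
    {t : ℝ} (ht : t ∈ Ioo (0 : ℝ) 1) (htD : ∀ q ∈ D, μ.real (Iic q) ≠ t) :
    Tendsto (fun i => quantile (μs i) t) l (𝓝 (quantile μ t)) := by
  refine tendsto_order.2 ⟨fun r hr => ?_, fun r hr => ?_⟩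
  · obtain ⟨q, hqD, hrq, hq⟩ := hD.exists_between hr
    have cdf_lt : μ.real (Iic q) < t := by
      rwa [← not_le, ← quantile_le_iff μ ht, not_le]
    filter_upwards [(hμs q hqD).eventually_lt_const cdf_lt] with i hi
    refine hrq.trans ?_
    rwa [← not_le, quantile_le_iff (μs i) ht, not_le]
  · obtain ⟨q, hqD, hq, hqr⟩ := hD.exists_between hr
    have lt_cdf : t < μ.real (Iic q) :=
      ((quantile_le_iff μ ht q).1 hq.le).lt_of_ne (htD q hqD).symm
    filter_upwards [(hμs q hqD).eventually_const_lt lt_cdf] with i hi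
    exact ((quantile_le_iff (μs i) ht q).2 hi.le).trans_lt hqr

end Quantile

namespace IsCoupling

variable {X Y : Type*} [MeasurableSpace X] [MeasurableSpace Y]
  {π : Measure (X × Y)} {μ : Measure X} {ν : Measure Y}

lemma measurePreserving_fst (h : IsCoupling π μ ν) : MeasurePreserving Prod.fst π μ :=
  ⟨measurable_fst, h.1⟩

lemma measurePreserving_snd (h : IsCoupling π μ ν) : MeasurePreserving Prod.snd π ν :=
  ⟨measurable_snd, h.2⟩

lemma isProbabilityMeasure [IsProbabilityMeasure μ] (h : IsCoupling π μ ν) :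
    IsProbabilityMeasure π := by
  have : IsProbabilityMeasure (π.map Prod.fst) := by rwa [h.1]
  exact Measure.isProbabilityMeasure_of_map Prod.fst

lemma integrable_add {a : X → ℝ} {b : Y → ℝ} (h : IsCoupling π μ ν) (ha : Integrable a μ)
    (hb : Integrable b ν) : Integrable (fun z => a z.1 + b z.2) π :=
  (h.measurePreserving_fst.integrable_comp_of_integrable ha).add
    (h.measurePreserving_snd.integrable_comp_of_integrable hb)

lemma integral_add {a : X → ℝ} {b : Y → ℝ} (h : IsCoupling π μ ν) (ha : Integrable a μ)
    (hb : Integrable b ν) : ∫ z, a z.1 + b z.2 ∂π = ∫ x, a x ∂μ + ∫ y, b y ∂ν := by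
  have fst_integrable := h.measurePreserving_fst.integrable_comp_of_integrable ha
  have snd_integrable := h.measurePreserving_snd.integrable_comp_of_integrable hb
  rw [← h.measurePreserving_fst.hasLaw.integral_comp ha.1,
    ← h.measurePreserving_snd.hasLaw.integral_comp hb.1]
  exact MeasureTheory.integral_add fst_integrable snd_integrable

end IsCoupling

section QuantileCoupling

/-- The comonotone coupling of `μ` and `ν`: the joint law of `quantile μ` and `quantile ν` under
the uniform distribution on `(0, 1)`. -/
noncomputable def quantileCoupling (μ ν : Measure ℝ) : Measure (ℝ × ℝ) :=
  (volume.restrict (Ioo (0 : ℝ) 1)).map fun t => (quantile μ t, quantile ν t)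

variable (μ ν : Measure ℝ) [IsProbabilityMeasure μ] [IsProbabilityMeasure ν]

lemma aemeasurable_quantile_prodMk :
    AEMeasurable (fun t => (quantile μ t, quantile ν t)) (volume.restrict (Ioo 0 1)) :=
  (aemeasurable_quantile μ).prodMk (aemeasurable_quantile ν)

lemma isCoupling_quantileCoupling : IsCoupling (quantileCoupling μ ν) μ ν := by
  have h := aemeasurable_quantile_prodMk μ ν
  constructor
  · rw [quantileCoupling, AEMeasurable.map_map_of_aemeasurable measurable_fst.aemeasurable h]
    exact map_quantile_volume_restrict μ
  · rw [quantileCoupling, AEMeasurable.map_map_of_aemeasurable measurable_snd.aemeasurable h]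
    exact map_quantile_volume_restrict ν

lemma integral_quantileCoupling {E : Type*} [NormedAddCommGroup E] [NormedSpace ℝ E]
    {f : ℝ × ℝ → E} (hf : StronglyMeasurable f) :
    ∫ z, f z ∂quantileCoupling μ ν = ∫ t in Ioo (0 : ℝ) 1, f (quantile μ t, quantile ν t) :=
  integral_map (aemeasurable_quantile_prodMk μ ν) hf.aestronglyMeasurable

lemma lintegral_quantileCoupling {f : ℝ × ℝ → ℝ≥0∞} (hf : Measurable f) :
    ∫⁻ z, f z ∂quantileCoupling μ ν = ∫⁻ t in Ioo (0 : ℝ) 1, f (quantile μ t, quantile ν t) :=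
  lintegral_map' hf.aemeasurable (aemeasurable_quantile_prodMk μ ν)

variable {μ ν}

lemma lintegral_quantileCoupling_le_liminf {f : ℝ × ℝ → ℝ≥0∞} (hf : LowerSemicontinuous f)
    {ι : Type*} {l : Filter ι} [l.IsCountablyGenerated] {μs νs : ι → Measure ℝ}
    [∀ i, IsProbabilityMeasure (μs i)] [∀ i, IsProbabilityMeasure (νs i)]
    {D : Set ℝ} (hD : Dense D) (hDc : D.Countable)
    (hμs : ∀ q ∈ D, Tendsto (fun i => (μs i).real (Iic q)) l (𝓝 (μ.real (Iic q))))
    (hνs : ∀ q ∈ D, Tendsto (fun i => (νs i).real (Iic q)) l (𝓝 (ν.real (Iic q)))) :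
    ∫⁻ z, f z ∂quantileCoupling μ ν
      ≤ liminf (fun i => ∫⁻ z, f z ∂quantileCoupling (μs i) (νs i)) l := by
  have ae_ne_cdf (ρ : Measure ℝ) :
      ∀ᵐ t ∂volume.restrict (Ioo (0 : ℝ) 1), ∀ q ∈ D, ρ.real (Iic q) ≠ t :=
    (ae_ball_iff hDc).2 fun q _ => (Measure.ae_ne _ _).mono fun _ h => h.symm
  have fatou_integrand : ∀ᵐ t ∂volume.restrict (Ioo (0 : ℝ) 1),
      f (quantile μ t, quantile ν t)
        ≤ liminf (fun i => f (quantile (μs i) t, quantile (νs i) t)) l := by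
    filter_upwards [ae_ne_cdf μ, ae_ne_cdf ν, ae_restrict_mem measurableSet_Ioo] with t hμ hν ht
    have quantiles_tendsto :=
      (tendsto_quantile hD hμs ht hμ).prodMk_nhds (tendsto_quantile hD hνs ht hν)
    exact (lowerSemicontinuous_iff_le_liminf.1 hf _).trans
      (liminf_le_liminf_of_le quantiles_tendsto)
  simp only [lintegral_quantileCoupling _ _ hf.measurable]
  exact (lintegral_mono_ae fatou_integrand).trans <| lintegral_liminf_le' fun i =>
    hf.measurable.comp_aemeasurable (aemeasurable_quantile_prodMk (μs i) (νs i))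

end QuantileCoupling

section EmpiricalMeasure

variable {ι κ α : Type*} [Fintype ι] [Fintype κ] [MeasurableSpace α]

/-- The empirical measure of a finite family of points: every point carries the same mass, and the
masses add up to one. It is `0` for the empty family. -/
noncomputable def empiricalMeasure (x : ι → α) : Measure α :=
  (Fintype.card ι : ℝ≥0∞)⁻¹ • ∑ i, Measure.dirac (x i)

instance [Nonempty ι] (x : ι → α) : IsProbabilityMeasure (empiricalMeasure x) :=
  ⟨by simp [empiricalMeasure, ENNReal.inv_mul_cancel]⟩

lemma empiricalMeasure_comp_equiv (x : ι → α) (e : κ ≃ ι) :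
    empiricalMeasure (x ∘ e) = empiricalMeasure x := by
  simp only [empiricalMeasure, Fintype.card_congr e, Function.comp_apply,
    e.sum_comp fun i => Measure.dirac (x i)]

lemma measureReal_empiricalMeasure (x : ι → α) {s : Set α} (hs : MeasurableSet s)
    [DecidablePred (· ∈ s)] :
    (empiricalMeasure x).real s = (Finset.univ.filter (x · ∈ s)).card / Fintype.card ι := by
  simp [empiricalMeasure, measureReal_def, Measure.dirac_apply' _ hs, indicator_apply,
    div_eq_inv_mul]

lemma lintegral_empiricalMeasure (x : ι → α) {f : α → ℝ≥0∞} (hf : Measurable f) :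
    ∫⁻ z, f z ∂empiricalMeasure x = (Fintype.card ι : ℝ≥0∞)⁻¹ * ∑ i, f (x i) := by
  simp [empiricalMeasure, lintegral_dirac' _ hf]

variable {E : Type*} [NormedAddCommGroup E]

lemma integrable_empiricalMeasure (x : ι → α) {f : α → E} (hf : StronglyMeasurable f) :
    Integrable f (empiricalMeasure x) := by
  rcases isEmpty_or_nonempty ι
  · simp [empiricalMeasure]
  · exact (integrable_finsetSum_measure.2 fun _ _ => integrable_dirac' hf enorm_lt_top).smul_measure
      (by simp)

lemma integral_empiricalMeasure [NormedSpace ℝ E] [CompleteSpace E] (x : ι → α) {f : α → E}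
    (hf : StronglyMeasurable f) :
    ∫ z, f z ∂empiricalMeasure x = (Fintype.card ι : ℝ)⁻¹ • ∑ i, f (x i) := by
  rw [empiricalMeasure, integral_smul_measure,
    integral_finsetSum_measure fun _ _ => integrable_dirac' hf enorm_lt_top]
  simp [integral_dirac' _ _ hf]

end EmpiricalMeasure

section StrongLaw

variable {Ω α : Type*} [MeasurableSpace Ω] [MeasurableSpace α] {P : Measure Ω} {π : Measure α}
  {X : ℕ → Ω → α}

lemma ae_tendsto_integral_empiricalMeasure (hX : ∀ i, HasLaw (X i) π P)
    (hindep : Pairwise fun i j => X i ⟂ᵢ[P] X j) {E : Type*} [NormedAddCommGroup E]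
    [NormedSpace ℝ E] [CompleteSpace E] {f : α → E} (hf : StronglyMeasurable f)
    (hfi : Integrable f π) :
    ∀ᵐ ω ∂P, Tendsto (fun n => ∫ z, f z ∂empiricalMeasure fun i : Fin n => X i ω) atTop
      (𝓝 (∫ z, f z ∂π)) := by
  borelize E
  have slln := strong_law_ae (fun i => f ∘ X i)
    (((hX 0).map_eq ▸ hfi).comp_aemeasurable (hX 0).aemeasurable)
    (fun _ _ hij => (hindep hij).comp hf.measurable hf.measurable)
    (fun i => ((hX i).identDistrib (hX 0)).comp hf.measurable)
  filter_upwards [slln] with ω hω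
  rw [(hX 0).integral_comp hf.aestronglyMeasurable] at hω
  simpa [integral_empiricalMeasure _ hf, Finset.sum_range] using hω

lemma ae_tendsto_measureReal_empiricalMeasure [IsFiniteMeasure π] (hX : ∀ i, HasLaw (X i) π P)
    (hindep : Pairwise fun i j => X i ⟂ᵢ[P] X j) {s : Set α} (hs : MeasurableSet s) :
    ∀ᵐ ω ∂P, Tendsto (fun n => (empiricalMeasure fun i : Fin n => X i ω).real s) atTop
      (𝓝 (π.real s)) := by
  simpa only [integral_indicator_one hs] using ae_tendsto_integral_empiricalMeasure hX hindep
    (stronglyMeasurable_one.indicator hs) ((integrable_const (1 : ℝ)).indicator hs)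

lemma ae_tendsto_cdf_empiricalMeasure {μ : Measure ℝ} [IsFiniteMeasure μ] {D : Set ℝ}
    (hD : D.Countable) {Y : ℕ → Ω → ℝ} (hY : ∀ i, HasLaw (Y i) μ P)
    (hindep : Pairwise fun i j => Y i ⟂ᵢ[P] Y j) :
    ∀ᵐ ω ∂P, ∀ q ∈ D, Tendsto (fun n => (empiricalMeasure fun i : Fin n => Y i ω).real (Iic q))
      atTop (𝓝 (μ.real (Iic q))) :=
  (ae_ball_iff hD).2 fun _ _ =>
    ae_tendsto_measureReal_empiricalMeasure hY hindep measurableSet_Iic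

theorem IsCoupling.exists_tendsto_empiricalMeasure {μ ν : Measure ℝ} {π : Measure (ℝ × ℝ)}
    [IsProbabilityMeasure π] (hπ : IsCoupling π μ ν) {D : Set ℝ} (hD : D.Countable)
    {E : Type*} [NormedAddCommGroup E] [NormedSpace ℝ E] [CompleteSpace E]
    {f : ℝ × ℝ → E} (hf : StronglyMeasurable f) (hfi : Integrable f π) :
    ∃ z : ℕ → ℝ × ℝ,
      (∀ q ∈ D, Tendsto (fun n => (empiricalMeasure fun i : Fin n => (z i).1).real (Iic q)) atTop
        (𝓝 (μ.real (Iic q)))) ∧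
      (∀ q ∈ D, Tendsto (fun n => (empiricalMeasure fun i : Fin n => (z i).2).real (Iic q)) atTop
        (𝓝 (ν.real (Iic q)))) ∧
      Tendsto (fun n => ∫ w, f w ∂empiricalMeasure fun i : Fin n => z i) atTop
        (𝓝 (∫ w, f w ∂π)) := by
  have : IsFiniteMeasure μ := hπ.1 ▸ inferInstance
  have : IsFiniteMeasure ν := hπ.2 ▸ inferInstance
  obtain ⟨Ω, _, P, Z, -, hZ, hindep, _⟩ := exists_iid ℕ π
  have fst_cdf := ae_tendsto_cdf_empiricalMeasure hD
    (fun i => hπ.measurePreserving_fst.hasLaw.comp (hZ i))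
    fun _ _ hij => (hindep.indepFun hij).comp measurable_fst measurable_fst
  have snd_cdf := ae_tendsto_cdf_empiricalMeasure hD
    (fun i => hπ.measurePreserving_snd.hasLaw.comp (hZ i))
    fun _ _ hij => (hindep.indepFun hij).comp measurable_snd measurable_snd
  have mean := ae_tendsto_integral_empiricalMeasure hZ (fun _ _ hij => hindep.indepFun hij) hf hfi
  obtain ⟨ω, hω⟩ := (fst_cdf.and (snd_cdf.and mean)).exists
  exact ⟨fun i => Z i ω, hω⟩

end StrongLaw

section SortedPoints

variable {n : ℕ} [NeZero n]

lemma exists_mem_Ioc_div {t : ℝ} (ht : t ∈ Ioc (0 : ℝ) 1) :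
    ∃ i : Fin n, t ∈ Ioc ((i : ℝ) / n) ((i + 1) / n) := by
  have n_pos : (0 : ℝ) < n := Nat.cast_pos.2 (NeZero.pos n)
  obtain ⟨k, hk⟩ := Nat.exists_eq_succ_of_ne_zero (Nat.ceil_pos.2 (mul_pos ht.1 n_pos)).ne'
  have k_lt : k < n := by
    rw [← Nat.succ_le_iff, ← hk, Nat.ceil_le]
    exact mul_le_of_le_one_left n_pos.le ht.2
  obtain ⟨k_lt_mul, mul_le_succ⟩ := (Nat.ceil_eq_iff k.succ_ne_zero).1 hk
  refine ⟨⟨k, k_lt⟩, (div_lt_iff₀ n_pos).2 k_lt_mul, (le_div_iff₀ n_pos).2 ?_⟩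
  exact_mod_cast mul_le_succ

lemma quantile_empiricalMeasure_of_monotone {u : Fin n → ℝ} (hu : Monotone u) {t : ℝ}
    (ht : t ∈ Ioo (0 : ℝ) 1) {i : Fin n} (hti : t ∈ Ioc ((i : ℝ) / n) ((i + 1) / n)) :
    quantile (empiricalMeasure u) t = u i := by
  have n_pos : (0 : ℝ) < n := Nat.cast_pos.2 (NeZero.pos n)
  refine eq_of_forall_ge_iff fun q => ?_
  rw [quantile_le_iff _ ht, measureReal_empiricalMeasure u measurableSet_Iic, Fintype.card_fin,
    ← Tuple.lt_card_le_iff_apply_le_of_monotone hu]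
  simp only [mem_Iic]
  constructor <;> intro h
  · exact_mod_cast (div_lt_div_iff_of_pos_right n_pos).1 (hti.1.trans_le h)
  · refine hti.2.trans ?_
    gcongr
    exact_mod_cast h

lemma lintegral_quantileCoupling_empiricalMeasure_le_of_monotone {u v : Fin n → ℝ}
    (hu : Monotone u) (hv : Monotone v) {f : ℝ × ℝ → ℝ≥0∞} (hf : Measurable f) :
    ∫⁻ z, f z ∂quantileCoupling (empiricalMeasure u) (empiricalMeasure v)
      ≤ ∫⁻ z, f z ∂empiricalMeasure fun i => (u i, v i) := by
  have n_pos : (0 : ℝ) < n := Nat.cast_pos.2 (NeZero.pos n)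
  let piece (i : Fin n) : Set ℝ := Ioc ((i : ℝ) / n) ((i + 1) / n) ∩ Ioo 0 1
  have measurableSet_piece (i : Fin n) : MeasurableSet (piece i) :=
    measurableSet_Ioc.inter measurableSet_Ioo
  have volume_piece_le (i : Fin n) : volume (piece i) ≤ (n : ℝ≥0∞)⁻¹ := by
    refine (measure_mono inter_subset_left).trans_eq ?_
    rw [Real.volume_Ioc, ← sub_div, add_sub_cancel_left, one_div, ENNReal.ofReal_inv_of_pos n_pos,
      ENNReal.ofReal_natCast]
  have Ioo_subset : Ioo (0 : ℝ) 1 ⊆ ⋃ i, piece i := fun t ht => by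
    obtain ⟨i, hi⟩ := exists_mem_Ioc_div (n := n) ⟨ht.1, ht.2.le⟩
    exact mem_iUnion.2 ⟨i, hi, ht⟩
  have lintegral_piece (i : Fin n) :
      ∫⁻ t in piece i, f (quantile (empiricalMeasure u) t, quantile (empiricalMeasure v) t)
        = f (u i, v i) * volume (piece i) := by
    rw [← setLIntegral_const]
    refine setLIntegral_congr_fun (measurableSet_piece i) fun t ht => ?_
    simp only [quantile_empiricalMeasure_of_monotone hu ht.2 ht.1,
      quantile_empiricalMeasure_of_monotone hv ht.2 ht.1]
  rw [lintegral_quantileCoupling _ _ hf, lintegral_empiricalMeasure _ hf, Fintype.card_fin,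
    mul_comm, Finset.sum_mul]
  calc ∫⁻ t in Ioo 0 1, f (quantile (empiricalMeasure u) t, quantile (empiricalMeasure v) t)
      ≤ ∑' i, ∫⁻ t in piece i,
          f (quantile (empiricalMeasure u) t, quantile (empiricalMeasure v) t) :=
        (lintegral_mono_set Ioo_subset).trans (lintegral_iUnion_le _ _)
    _ = ∑ i, f (u i, v i) * volume (piece i) := by simp only [tsum_fintype, lintegral_piece]
    _ ≤ ∑ i, f (u i, v i) * (n : ℝ≥0∞)⁻¹ := by gcongr; exact volume_piece_le _

end SortedPoints

namespace Submodular

variable {c : ℝ × ℝ → ℝ}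

lemma sub_add (hc : Submodular c) (a b : ℝ → ℝ) :
    Submodular fun z => c z - (a z.1 + b z.2) := fun x x' y y' hx hy => by
  linarith [hc x x' y y' hx hy]

section Rearrangement

variable {ι : Type*} [Fintype ι] {u v : ι → ℝ}

lemma sum_comp_swap_le (hc : Submodular c) [DecidableEq ι] {i j : ι} (hu : u i ≤ u j)
    (hv : v j ≤ v i) : ∑ k, c (u k, v (Equiv.swap i j k)) ≤ ∑ k, c (u k, v k) := by
  rcases eq_or_ne i j with rfl | hij
  · simp
  have off_pair (k : ι) (hk : k ∉ ({i, j} : Finset ι)) :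
      c (u k, v (Equiv.swap i j k)) = c (u k, v k) := by
    simp only [Finset.mem_insert, Finset.mem_singleton, not_or] at hk
    rw [Equiv.swap_apply_of_ne_of_ne hk.1 hk.2]
  rw [← Finset.sum_add_sum_compl {i, j}, ← Finset.sum_add_sum_compl {i, j} fun k => c (u k, v k),
    Finset.sum_congr rfl fun k hk => off_pair k (Finset.mem_compl.1 hk),
    Finset.sum_pair hij, Finset.sum_pair hij, Equiv.swap_apply_left, Equiv.swap_apply_right]
  linarith [hc (u j) (u i) (v i) (v j) hu hv]

theorem sum_le_sum_comp_perm (hc : Submodular c) [LinearOrder ι] (hu : Monotone u)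
    (hv : Monotone v) (σ : Equiv.Perm ι) : ∑ i, c (u i, v i) ≤ ∑ i, c (u i, v (σ i)) := by
  -- Exchanging two values so that the largest displaced index becomes fixed does not increase the
  -- sum.
  suffices h : ∀ (s : Finset ι) (σ : Equiv.Perm ι), (∀ i ∉ s, σ i = i) →
      ∑ i, c (u i, v i) ≤ ∑ i, c (u i, v (σ i)) from h Finset.univ σ (by simp)
  intro s
  induction s using Finset.induction_on_max with
  | empty =>
    intro σ hσ
    simp [hσ]
  | insert m s hm ih =>
    intro σ hσ
    have fixes_above {i : ι} (hi : m < i) : σ i = i :=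
      hσ i fun h => (Finset.mem_insert.1 h).elim hi.ne' fun h => hi.not_gt (hm i h)
    have apply_le : σ m ≤ m := le_of_not_gt fun h => h.ne' (σ.injective (fixes_above h))
    have symm_apply_le : σ.symm m ≤ m := le_of_not_gt fun h =>
      h.ne ((σ.apply_symm_apply m).symm.trans (fixes_above h))
    have swapped_fixes (i : ι) (hi : i ∉ s) : (σ * Equiv.swap (σ.symm m) m) i = i := by
      rcases eq_or_ne i m with rfl | him
      · simp
      have fixed : σ i = i := hσ i (by simp [him, hi])
      have ne_symm : i ≠ σ.symm m := fun h => him (by rw [← fixed, h, σ.apply_symm_apply])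
      rw [Equiv.Perm.mul_apply, Equiv.swap_apply_of_ne_of_ne ne_symm him, fixed]
    exact (ih _ swapped_fixes).trans <| hc.sum_comp_swap_le (v := v ∘ σ) (hu symm_apply_le)
      (hv (by simpa using apply_le))

end Rearrangement

lemma lintegral_quantileCoupling_empiricalMeasure_le (hc : Submodular c) (hcm : Measurable c)
    (hc0 : 0 ≤ c) {n : ℕ} [NeZero n] (x y : Fin n → ℝ) :
    ∫⁻ z, .ofReal (c z) ∂quantileCoupling (empiricalMeasure x) (empiricalMeasure y)
      ≤ ∫⁻ z, .ofReal (c z) ∂empiricalMeasure fun i => (x i, y i) := by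
  let σ := Tuple.sort x
  let τ := Tuple.sort y
  have rearrangement : ∑ i, c (x (σ i), y (τ i)) ≤ ∑ i, c (x i, y i) := by
    calc ∑ i, c (x (σ i), y (τ i)) ≤ ∑ i, c (x (σ i), y (τ ((τ⁻¹ * σ) i))) :=
          hc.sum_le_sum_comp_perm (Tuple.monotone_sort x) (Tuple.monotone_sort y) (τ⁻¹ * σ)
      _ = ∑ i, c (x (σ i), y (σ i)) := by simp
      _ = ∑ i, c (x i, y i) := Equiv.sum_comp σ fun i => c (x i, y i)
  calc ∫⁻ z, .ofReal (c z) ∂quantileCoupling (empiricalMeasure x) (empiricalMeasure y)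
      = ∫⁻ z, .ofReal (c z)
          ∂quantileCoupling (empiricalMeasure (x ∘ σ)) (empiricalMeasure (y ∘ τ)) := by
        rw [empiricalMeasure_comp_equiv, empiricalMeasure_comp_equiv]
    _ ≤ ∫⁻ z, .ofReal (c z) ∂empiricalMeasure fun i => (x (σ i), y (τ i)) :=
        lintegral_quantileCoupling_empiricalMeasure_le_of_monotone (Tuple.monotone_sort x)
          (Tuple.monotone_sort y) hcm.ennreal_ofReal
    _ ≤ ∫⁻ z, .ofReal (c z) ∂empiricalMeasure fun i => (x i, y i) := by
        simp only [lintegral_empiricalMeasure _ hcm.ennreal_ofReal,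
          ← ENNReal.ofReal_sum_of_nonneg fun _ _ => hc0 _]
        gcongr

variable {μ ν : Measure ℝ} [IsProbabilityMeasure μ] [IsProbabilityMeasure ν]
  {π : Measure (ℝ × ℝ)}

lemma lintegral_quantileCoupling_le (hc : Submodular c) (hcl : LowerSemicontinuous c) (hc0 : 0 ≤ c)
    (hπ : IsCoupling π μ ν) :
    ∫⁻ z, .ofReal (c z) ∂quantileCoupling μ ν ≤ ∫⁻ z, .ofReal (c z) ∂π := by
  rcases eq_or_ne (∫⁻ z, .ofReal (c z) ∂π) ∞ with h | h
  · exact h ▸ le_top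
  have hcπ : Integrable c π := (lintegral_ofReal_ne_top_iff_integrable
    hcl.measurable.aestronglyMeasurable (ae_of_all _ hc0)).1 h
  have := hπ.isProbabilityMeasure
  have hcs := hcl.measurable.stronglyMeasurable
  have hD : (range ((↑) : ℚ → ℝ)).Countable := countable_range _
  obtain ⟨z, hfst, hsnd, hcost⟩ := hπ.exists_tendsto_empiricalMeasure hD hcs hcπ
  -- The index is shifted because the empirical measure of no points is `0`.
  have shift := tendsto_add_atTop_nat 1
  let π' (n : ℕ) := empiricalMeasure fun i : Fin (n + 1) => z i
  let μ' (n : ℕ) := empiricalMeasure fun i : Fin (n + 1) => (z i).1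
  let ν' (n : ℕ) := empiricalMeasure fun i : Fin (n + 1) => (z i).2
  calc ∫⁻ z, .ofReal (c z) ∂quantileCoupling μ ν
      ≤ liminf (fun n => ∫⁻ z, .ofReal (c z) ∂quantileCoupling (μ' n) (ν' n)) atTop :=
        lintegral_quantileCoupling_le_liminf
          (ENNReal.continuous_ofReal.comp_lowerSemicontinuous hcl ENNReal.ofReal_mono)
          Rat.denseRange_cast hD (fun q hq => (hfst q hq).comp shift)
          fun q hq => (hsnd q hq).comp shift
    _ ≤ liminf (fun n => ∫⁻ z, .ofReal (c z) ∂π' n) atTop :=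
        liminf_le_liminf <| .of_forall fun n =>
          hc.lintegral_quantileCoupling_empiricalMeasure_le hcl.measurable hc0 _ _
    _ = liminf (fun n => .ofReal (∫ z, c z ∂π' n)) atTop := by
        simp only [π', ofReal_integral_eq_lintegral_ofReal (integrable_empiricalMeasure _ hcs)
          (ae_of_all _ hc0)]
    _ = .ofReal (∫ z, c z ∂π) := (ENNReal.tendsto_ofReal (hcost.comp shift)).liminf_eq
    _ = ∫⁻ z, .ofReal (c z) ∂π := ofReal_integral_eq_lintegral_ofReal hcπ (ae_of_all _ hc0)

lemma integrable_and_integral_quantileCoupling_le (hc : Submodular c)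
    (hcl : LowerSemicontinuous c) {a b : ℝ → ℝ} (ha : UpperSemicontinuous a)
    (hb : UpperSemicontinuous b) (hai : Integrable a μ) (hbi : Integrable b ν)
    (hab : ∀ x y, a x + b y ≤ c (x, y)) (hπ : IsCoupling π μ ν) (hcπ : Integrable c π) :
    Integrable c (quantileCoupling μ ν) ∧ ∫ z, c z ∂quantileCoupling μ ν ≤ ∫ z, c z ∂π := by
  let d (z : ℝ × ℝ) : ℝ := c z - (a z.1 + b z.2)
  have hγ := isCoupling_quantileCoupling μ ν
  have d_nonneg : 0 ≤ d := fun z => sub_nonneg.2 (hab z.1 z.2)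
  have d_lsc : LowerSemicontinuous d := by
    simpa [d, sub_eq_add_neg, Function.comp_def] using
      hcl.add ((ha.comp continuous_fst).add (hb.comp continuous_snd)).neg
  have dπ_integrable : Integrable d π := hcπ.sub (hπ.integrable_add hai hbi)
  have lintegral_le := (hc.sub_add a b).lintegral_quantileCoupling_le d_lsc d_nonneg hπ
  have dγ_integrable : Integrable d (quantileCoupling μ ν) :=
    (lintegral_ofReal_ne_top_iff_integrable d_lsc.measurable.aestronglyMeasurable
      (ae_of_all _ d_nonneg)).1 (lintegral_le.trans_lt dπ_integrable.lintegral_lt_top).ne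
  have cγ_integrable : Integrable c (quantileCoupling μ ν) :=
    (dγ_integrable.add (hγ.integrable_add hai hbi)).congr
      (ae_of_all _ fun _ => sub_add_cancel _ _)
  have integral_d_le : ∫ z, d z ∂quantileCoupling μ ν ≤ ∫ z, d z ∂π := by
    rw [integral_eq_lintegral_of_nonneg_ae (ae_of_all _ d_nonneg) dγ_integrable.1,
      integral_eq_lintegral_of_nonneg_ae (ae_of_all _ d_nonneg) dπ_integrable.1]
    exact ENNReal.toReal_mono dπ_integrable.lintegral_lt_top.ne lintegral_le
  refine ⟨cγ_integrable, ?_⟩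
  rwa [integral_sub cγ_integrable (hγ.integrable_add hai hbi),
    integral_sub hcπ (hπ.integrable_add hai hbi), hγ.integral_add hai hbi, hπ.integral_add hai hbi,
    sub_le_sub_iff_right] at integral_d_le

end Submodular

/-- Cambanis–Simons–Stout / scalar optimal transport: for a submodular cost satisfying the
standing assumption, the optimal transport cost between measures on `ℝ` equals the cost of
the comonotone (quantile) coupling. -/
theorem scalar_ot_closed_form
    (μ ν : Measure ℝ) [IsProbabilityMeasure μ] [IsProbabilityMeasure ν]
    (c : ℝ × ℝ → ℝ) (hc : LowerSemicontinuous c)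
    (a : ℝ → ℝ) (b : ℝ → ℝ)
    (ha : UpperSemicontinuous a) (hb : UpperSemicontinuous b)
    (hai : Integrable a μ) (hbi : Integrable b ν)
    (hab : ∀ x y, a x + b y ≤ c (x, y))
    (hsub : Submodular c) :
    sInf {r : ℝ | ∃ π : Measure (ℝ × ℝ), IsCoupling π μ ν ∧ Integrable c π ∧
        r = ∫ z, c z ∂π}
      = ∫ t in Ioo (0 : ℝ) 1, c (quantile μ t, quantile ν t) := by
  rw [← integral_quantileCoupling μ ν hc.measurable.stronglyMeasurable]
  have optimal {π : Measure (ℝ × ℝ)} (hπ : IsCoupling π μ ν) (hcπ : Integrable c π) :=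
    hsub.integrable_and_integral_quantileCoupling_le hc ha hb hai hbi hab hπ hcπ
  by_cases hcγ : Integrable c (quantileCoupling μ ν)
  · refine IsLeast.csInf_eq ⟨⟨_, isCoupling_quantileCoupling μ ν, hcγ, rfl⟩, ?_⟩
    rintro _ ⟨π, hπ, hcπ, rfl⟩
    exact (optimal hπ hcπ).2
  · -- No coupling has finite cost, and both sides take their junk value `0`.
    rw [integral_undef hcγ]
    convert Real.sInf_empty
    refine eq_empty_of_forall_notMem ?_
    rintro _ ⟨π, hπ, hcπ, -⟩
    exact hcγ (optimal hπ hcπ).1
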